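/- arXiv:1910.08033 — 2 statements merged into one kernel-verified Lean document; each statement's English description precedes it below -/
import Mathlib

section
/- Let m ≥ n ≥ 1 and let A ∈ ℝ^{m×n} be in general position, meaning every set of n rows of A is linearly independent. Then for every i ∈ [m], lim_{p→0⁺} w_p(A)_i = n/m. -/
open Matrix Real BigOperators Pointwise

noncomputable def leverage {m n : ℕ} (B : Matrix (Fin m) (Fin n) ℝ) : Fin m → ℝ :=
  fun i => (B * (Bᵀ * B)⁻¹ * Bᵀ) i i

noncomputable def lewisRescaled {m n : ℕ} (A : Matrix (Fin m) (Fin n) ℝ) (p : ℝ)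
    (w : Fin m → ℝ) : Matrix (Fin m) (Fin n) ℝ :=
  Matrix.diagonal (fun i => w i ^ ((1:ℝ)/2 - 1/p)) * A

def IsLewisWeight {m n : ℕ} (A : Matrix (Fin m) (Fin n) ℝ) (p : ℝ) (w : Fin m → ℝ) : Prop :=
  (∀ i, 0 < w i) ∧ ∀ i, w i = leverage (lewisRescaled A p w) i

/-!
By Cauchy–Binet, `1 - leverage B i` is the share of `det (Bᵀ * B)` carried by the squared maximal
minors of `B` that avoid row `i`. The transposition of `i` and `j` matches the minors avoiding `i`
with those avoiding `j`, so a row scaled by a large enough factor relative to another one has the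
larger leverage score. In `W ^ (1/2 - 1/p) * A` with `p < 2` the rows of small weight get the large
factors, so the weights cannot differ much: `w j ≤ K ^ (p / (2 - p)) * w i`, where `K` bounds the
ratios of squared maximal minors of `A`. As `p → 0⁺` the factor tends to `1`, and the weights sum
to `n`.
-/

open Filter Topology
open scoped Nat

section CauchyBinet

variable {ι κ R : Type*} [Fintype κ] [DecidableEq κ] [CommRing R]

theorem det_submatrix_eq_zero_of_not_injective (N : Matrix ι κ R) {f : κ → ι}
    (hf : ¬ Function.Injective f) : (N.submatrix f id).det = 0 := by
  obtain ⟨a, b, hab, hne⟩ := Function.not_injective_iff.mp hf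
  exact det_zero_of_row_eq hne (by ext k; simp [hab])

variable [Fintype ι]

theorem det_mul_eq_sum_prod_mul_det_submatrix (M : Matrix κ ι R) (N : Matrix ι κ R) :
    (M * N).det = ∑ f : κ ↪ ι, (∏ k, M k (f k)) * (N.submatrix f id).det := by
  have hrows : M * N = fun k => ∑ x, M k x • N x := by
    ext k l
    simp [Matrix.mul_apply]
  calc (M * N).det
      = (detRowAlternating (R := R)).toMultilinearMap fun k => ∑ x, M k x • N x := by
        rw [hrows]; rfl
    _ = ∑ f : κ → ι, (∏ k, M k (f k)) * (N.submatrix f id).det := by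
        rw [MultilinearMap.map_sum]
        refine Finset.sum_congr rfl fun f _ => ?_
        rw [MultilinearMap.map_smul_univ, smul_eq_mul]
        rfl
    _ = ∑ f : κ ↪ ι, (∏ k, M k (f k)) * (N.submatrix f id).det := by
        refine (Fintype.sum_of_injective _ DFunLike.coe_injective _ _ (fun f hf => ?_)
          fun _ => rfl).symm
        have hf' : ¬ Function.Injective f := fun h => hf ⟨⟨f, h⟩, rfl⟩
        rw [det_submatrix_eq_zero_of_not_injective N hf', mul_zero]

-- Summing over embeddings instead of subsets avoids an order on `ι`, at the price of the factorial.
theorem factorial_card_mul_det_mul (M : Matrix κ ι R) (N : Matrix ι κ R) :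
    ((Fintype.card κ)! : R) * (M * N).det =
      ∑ f : κ ↪ ι, (M.submatrix id f).det * (N.submatrix f id).det := by
  have expand (σ : Equiv.Perm κ) : (M * N).det =
      ∑ f : κ ↪ ι, (Equiv.Perm.sign σ : R) * (∏ k, M (σ k) (f k)) * (N.submatrix f id).det := by
    rw [det_mul_eq_sum_prod_mul_det_submatrix,
      ← Equiv.sum_comp (Equiv.embeddingCongr σ (Equiv.refl ι))]
    refine Finset.sum_congr rfl fun f _ => ?_
    have hprod : ∏ k, M k (f (σ.symm k)) = ∏ k, M (σ k) (f k) := by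
      rw [← Equiv.prod_comp σ]
      simp only [Equiv.symm_apply_apply]
    have hdet : (N.submatrix (fun k => f (σ.symm k)) id).det =
        Equiv.Perm.sign σ * (N.submatrix f id).det := by
      rw [← Equiv.Perm.sign_symm σ, ← det_permute]
      rfl
    change (∏ k, M k (f (σ.symm k))) * (N.submatrix (fun k => f (σ.symm k)) id).det = _
    rw [hprod, hdet]
    ring
  calc ((Fintype.card κ)! : R) * (M * N).det
      = ∑ _σ : Equiv.Perm κ, (M * N).det := by
        rw [Finset.sum_const, Finset.card_univ, Fintype.card_perm, nsmul_eq_mul]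
    _ = ∑ f : κ ↪ ι, ∑ σ : Equiv.Perm κ,
          (Equiv.Perm.sign σ : R) * (∏ k, M (σ k) (f k)) * (N.submatrix f id).det := by
        rw [Finset.sum_congr rfl fun σ _ => expand σ, Finset.sum_comm]
    _ = ∑ f : κ ↪ ι, (M.submatrix id f).det * (N.submatrix f id).det := by
        simp only [← Finset.sum_mul, det_apply', submatrix_apply, id]

theorem factorial_card_mul_det_transpose_mul_self (B : Matrix ι κ R) :
    ((Fintype.card κ)! : R) * (Bᵀ * B).det = ∑ f : κ ↪ ι, (B.submatrix f id).det ^ 2 := by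
  rw [factorial_card_mul_det_mul]
  refine Finset.sum_congr rfl fun f _ => ?_
  rw [← transpose_submatrix, det_transpose, sq]

theorem det_transpose_mul_self_pos [LinearOrder R] [IsStrictOrderedRing R] {B : Matrix ι κ R}
    (f : κ ↪ ι) (hf : (B.submatrix f id).det ≠ 0) : 0 < (Bᵀ * B).det := by
  refine pos_of_mul_pos_right ?_ (Nat.cast_nonneg' (α := R) (Fintype.card κ)!)
  rw [factorial_card_mul_det_transpose_mul_self]
  exact Finset.sum_pos' (fun _ _ => sq_nonneg _) ⟨f, Finset.mem_univ f, sq_pos_of_ne_zero hf⟩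

end CauchyBinet

section RowRemoval

theorem submatrix_updateRow_of_notMem_range {ι κ l R : Type*} [DecidableEq ι] (B : Matrix ι κ R)
    {i : ι} {f : l → ι} (hi : i ∉ Set.range f) (v : κ → R) :
    (B.updateRow i v).submatrix f id = B.submatrix f id := by
  ext k l
  have hk : f k ≠ i := fun h => hi ⟨k, h⟩
  simp [updateRow_ne hk]

variable {ι κ R : Type*} [Fintype κ] [DecidableEq ι] [DecidableEq κ] [CommRing R]

theorem det_submatrix_updateRow_zero_of_mem_range (B : Matrix ι κ R) {i : ι} {f : κ → ι}
    (hi : i ∈ Set.range f) : ((B.updateRow i 0).submatrix f id).det = 0 := by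
  obtain ⟨k, rfl⟩ := hi
  exact det_eq_zero_of_row_eq_zero k (by simp)

variable [Fintype ι]

theorem det_gram_updateRow_zero (B : Matrix ι κ R) (hB : IsUnit (Bᵀ * B).det) (i : ι) :
    ((B.updateRow i 0)ᵀ * B.updateRow i 0).det =
      (Bᵀ * B).det * (1 - (B * (Bᵀ * B)⁻¹ * Bᵀ) i i) := by
  have hgram : (B.updateRow i 0)ᵀ * B.updateRow i 0 =
      Bᵀ * B + replicateCol Unit (-B i) * replicateRow Unit (B i) := by
    ext k l
    have hsum (C : Matrix ι κ R) : (Cᵀ * C) k l = C i k * C i l + ∑ x ∈ {i}ᶜ, C x k * C x l := by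
      rw [Matrix.mul_apply, Fintype.sum_eq_add_sum_compl i]
      rfl
    have hrest : ∑ x ∈ {i}ᶜ, B.updateRow i 0 x k * B.updateRow i 0 x l =
        ∑ x ∈ {i}ᶜ, B x k * B x l :=
      Finset.sum_congr rfl fun x hx => by rw [updateRow_ne (by simpa using hx)]
    rw [Matrix.add_apply, hsum, hsum, hrest]
    simp [Matrix.mul_apply]
  have hform : (1 + replicateRow Unit (B i) * (Bᵀ * B)⁻¹ * replicateCol Unit (-B i)).det =
      1 - (B * (Bᵀ * B)⁻¹ * Bᵀ) i i := by
    rw [det_unique, Matrix.add_apply, one_apply_eq, sub_eq_add_neg]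
    simp [Matrix.mul_apply]
  rw [hgram, det_add_replicateCol_mul_replicateRow hB, hform]

theorem det_gram_updateRow_zero_le [LinearOrder R] [IsStrictOrderedRing R] (B : Matrix ι κ R)
    {i j : ι} (h : ∀ f : κ ↪ ι, i ∉ Set.range f → j ∈ Set.range f →
      (B.submatrix f id).det ^ 2 ≤
        (B.submatrix (f.trans (Equiv.swap i j).toEmbedding) id).det ^ 2) :
    ((B.updateRow i 0)ᵀ * B.updateRow i 0).det ≤ ((B.updateRow j 0)ᵀ * B.updateRow j 0).det := by
  refine le_of_mul_le_mul_left ?_ (Nat.cast_pos (α := R).mpr (Fintype.card κ).factorial_pos)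
  rw [factorial_card_mul_det_transpose_mul_self, factorial_card_mul_det_transpose_mul_self,
    ← Equiv.sum_comp (Equiv.embeddingCongr (Equiv.refl κ) (Equiv.swap i j))
      fun f => ((B.updateRow j 0).submatrix f id).det ^ 2]
  refine Finset.sum_le_sum fun f _ => ?_
  set g := Equiv.embeddingCongr (Equiv.refl κ) (Equiv.swap i j) f
  by_cases hi : i ∈ Set.range f
  · rw [det_submatrix_updateRow_zero_of_mem_range B hi, zero_pow two_ne_zero]
    exact sq_nonneg _
  have hjg : j ∉ Set.range g := by
    rintro ⟨k, hk⟩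
    exact hi ⟨k, (Equiv.swap i j).injective (hk.trans (Equiv.swap_apply_left i j).symm)⟩
  rw [submatrix_updateRow_of_notMem_range B hi, submatrix_updateRow_of_notMem_range B hjg]
  by_cases hj : j ∈ Set.range f
  · exact h f hi hj
  · have hgf : g = f := by
      ext k : 1
      exact Equiv.swap_apply_of_ne_of_ne (fun hk => hi ⟨k, hk⟩) fun hk => hj ⟨k, hk⟩
    rw [hgf]

end RowRemoval

section MinorRatio

theorem exists_prod_eq_mul_and_prod_swap_eq_mul {ι κ M : Type*} [Fintype κ] [DecidableEq ι]
    [CommMonoid M] (d : ι → M) {i j : ι} (f : κ ↪ ι) (hi : i ∉ Set.range f)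
    (hj : j ∈ Set.range f) :
    ∃ P, ∏ k, d (f k) = d j * P ∧ ∏ k, d (Equiv.swap i j (f k)) = d i * P := by
  classical
  obtain ⟨l, rfl⟩ := hj
  refine ⟨∏ k ∈ {l}ᶜ, d (f k), Fintype.prod_eq_mul_prod_compl l _, ?_⟩
  rw [Fintype.prod_eq_mul_prod_compl l, Equiv.swap_apply_right]
  congr 1
  refine Finset.prod_congr rfl fun k hk => ?_
  have hkl : k ≠ l := by simpa using hk
  rw [Equiv.swap_apply_of_ne_of_ne (fun h => hi ⟨k, h⟩) (f.injective.ne hkl)]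

variable {ι κ R : Type*} [Fintype κ] [DecidableEq κ]

theorem det_submatrix_ne_zero_of_linearIndependent [Field R] {A : Matrix ι κ R}
    (hA : ∀ s : Finset ι, s.card = Fintype.card κ →
      LinearIndependent R fun i : {x // x ∈ s} => A i.1) (f : κ ↪ ι) :
    (A.submatrix f id).det ≠ 0 := by
  have hrows : LinearIndependent R (A.submatrix f id).row :=
    (hA (Finset.univ.map f) (Finset.card_map f)).comp (fun k => ⟨f k, by simp⟩)
      fun _ _ h => f.injective (congrArg Subtype.val h)
  rw [linearIndependent_rows_iff_isUnit, isUnit_iff_isUnit_det] at hrows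
  exact hrows.ne_zero

/-- The ratios of squared maximal minors of `A` are at most `K`, stated without division. Maximal
minors are indexed by embeddings, so each row set occurs once for every ordering; squaring removes
the sign. -/
def MinorRatioBound [CommRing R] [LE R] (A : Matrix ι κ R) (K : R) : Prop :=
  ∀ f g : κ ↪ ι, (A.submatrix f id).det ^ 2 ≤ K * (A.submatrix g id).det ^ 2

theorem exists_minorRatioBound [Finite ι] [Field R] [LinearOrder R] [IsStrictOrderedRing R]
    {A : Matrix ι κ R} (hA : ∀ f : κ ↪ ι, (A.submatrix f id).det ≠ 0) :
    ∃ K, MinorRatioBound A K := by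
  obtain ⟨K, hK⟩ := (Set.finite_range fun q : (κ ↪ ι) × (κ ↪ ι) =>
    (A.submatrix q.1 id).det ^ 2 / (A.submatrix q.2 id).det ^ 2).bddAbove
  exact ⟨K, fun f g => (div_le_iff₀ (sq_pos_of_ne_zero (hA g))).mp (hK ⟨(f, g), rfl⟩)⟩

variable [CommRing R]

theorem MinorRatioBound.one_le [LinearOrder R] [IsStrictOrderedRing R] {A : Matrix ι κ R} {K : R}
    (hK : MinorRatioBound A K) (f : κ ↪ ι) (hf : (A.submatrix f id).det ≠ 0) : 1 ≤ K :=
  le_of_mul_le_mul_right (by simpa only [one_mul] using hK f f) (sq_pos_of_ne_zero hf)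

theorem det_submatrix_diagonal_mul [Fintype ι] [DecidableEq ι] (d : ι → R) (A : Matrix ι κ R)
    (f : κ → ι) :
    ((diagonal d * A).submatrix f id).det = (∏ k, d (f k)) * (A.submatrix f id).det := by
  rw [← det_mul_column]
  congr 1
  ext k l
  simp

theorem MinorRatioBound.det_sq_diagonal_mul_le [Fintype ι] [DecidableEq ι] [LinearOrder R]
    [IsStrictOrderedRing R] {A : Matrix ι κ R} {K : R} (hK : MinorRatioBound A K) {d : ι → R}
    {i j : ι} (hij : K * d j ^ 2 ≤ d i ^ 2) (f : κ ↪ ι) (hi : i ∉ Set.range f)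
    (hj : j ∈ Set.range f) :
    ((diagonal d * A).submatrix f id).det ^ 2 ≤
      ((diagonal d * A).submatrix (f.trans (Equiv.swap i j).toEmbedding) id).det ^ 2 := by
  set g := f.trans (Equiv.swap i j).toEmbedding
  obtain ⟨P, hf, hg⟩ : ∃ P, ∏ k, d (f k) = d j * P ∧ ∏ k, d (g k) = d i * P :=
    exists_prod_eq_mul_and_prod_swap_eq_mul d f hi hj
  rw [det_submatrix_diagonal_mul, det_submatrix_diagonal_mul, hf, hg]
  calc (d j * P * (A.submatrix f id).det) ^ 2
      = (d j * P) ^ 2 * (A.submatrix f id).det ^ 2 := mul_pow _ _ 2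
    _ ≤ (d j * P) ^ 2 * (K * (A.submatrix g id).det ^ 2) := by
        gcongr
        exact hK f g
    _ = K * d j ^ 2 * (P * (A.submatrix g id).det) ^ 2 := by ring
    _ ≤ d i ^ 2 * (P * (A.submatrix g id).det) ^ 2 := by gcongr
    _ = (d i * P * (A.submatrix g id).det) ^ 2 := by ring

end MinorRatio

section Leverage

variable {m n : ℕ}

theorem sum_leverage {B : Matrix (Fin m) (Fin n) ℝ} (hB : IsUnit (Bᵀ * B).det) :
    ∑ i, leverage B i = n := by
  calc ∑ i, leverage B i = (B * (Bᵀ * B)⁻¹ * Bᵀ).trace := rfl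
    _ = (1 : Matrix (Fin n) (Fin n) ℝ).trace := by
      rw [trace_mul_comm, ← Matrix.mul_assoc, mul_nonsing_inv _ hB]
    _ = n := by rw [trace_one, Fintype.card_fin]

theorem leverage_le_leverage_of_det_sq_le {B : Matrix (Fin m) (Fin n) ℝ} (hB : 0 < (Bᵀ * B).det)
    {i j : Fin m} (h : ∀ f : Fin n ↪ Fin m, i ∉ Set.range f → j ∈ Set.range f →
      (B.submatrix f id).det ^ 2 ≤
        (B.submatrix (f.trans (Equiv.swap i j).toEmbedding) id).det ^ 2) :
    leverage B j ≤ leverage B i := by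
  have hdet := det_gram_updateRow_zero_le B h
  rw [det_gram_updateRow_zero B hB.ne'.isUnit, det_gram_updateRow_zero B hB.ne'.isUnit] at hdet
  exact (sub_le_sub_iff_left 1).mp (le_of_mul_le_mul_left hdet hB)

end Leverage

section LewisWeight

variable {m n : ℕ} {A : Matrix (Fin m) (Fin n) ℝ} {p : ℝ} {w : Fin m → ℝ}

theorem det_gram_lewisRescaled_pos (hw : ∀ i, 0 < w i) (f : Fin n ↪ Fin m)
    (hf : (A.submatrix f id).det ≠ 0) :
    0 < ((lewisRescaled A p w)ᵀ * lewisRescaled A p w).det := by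
  refine det_transpose_mul_self_pos f ?_
  rw [lewisRescaled, det_submatrix_diagonal_mul]
  exact mul_ne_zero (Finset.prod_ne_zero_iff.mpr fun k _ => (rpow_pos_of_pos (hw _) _).ne') hf

theorem IsLewisWeight.sum_eq (hw : IsLewisWeight A p w) (f : Fin n ↪ Fin m)
    (hf : (A.submatrix f id).det ≠ 0) : ∑ i, w i = n := by
  rw [← sum_leverage (det_gram_lewisRescaled_pos (p := p) hw.1 f hf).ne'.isUnit]
  exact Finset.sum_congr rfl fun i _ => hw.2 i

theorem mul_sq_rpow_le_of_rpow_mul_le {K x y : ℝ} (hp : 0 < p) (hp2 : p < 2) (hK : 0 ≤ K)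
    (hx : 0 < x) (hy : 0 < y) (h : K ^ (p / (2 - p)) * x ≤ y) :
    K * (y ^ ((1 : ℝ) / 2 - 1 / p)) ^ 2 ≤ (x ^ ((1 : ℝ) / 2 - 1 / p)) ^ 2 := by
  have hsq {z : ℝ} (hz : 0 < z) :
      (z ^ ((1 : ℝ) / 2 - 1 / p)) ^ 2 = (z ^ ((2 - p) / p))⁻¹ := by
    rw [← rpow_natCast, ← rpow_mul hz.le, ← rpow_neg hz.le]
    congr 1
    push_cast
    field_simp
    ring
  have h2p : 0 < 2 - p := sub_pos.mpr hp2
  have hpow : K * x ^ ((2 - p) / p) ≤ y ^ ((2 - p) / p) :=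
    calc K * x ^ ((2 - p) / p) = (K ^ (p / (2 - p)) * x) ^ ((2 - p) / p) := by
          rw [mul_rpow (rpow_nonneg hK _) hx.le, ← rpow_mul hK, div_mul_div_cancel₀ h2p.ne',
            div_self hp.ne', rpow_one]
      _ ≤ y ^ ((2 - p) / p) := by gcongr
  rw [hsq hx, hsq hy, ← div_eq_mul_inv, div_le_iff₀ (by positivity), inv_mul_eq_div,
    le_div_iff₀ (by positivity)]
  exact hpow

theorem IsLewisWeight.le_rpow_mul (hw : IsLewisWeight A p w) (hp : 0 < p) (hp2 : p < 2)
    (f : Fin n ↪ Fin m) (hf : (A.submatrix f id).det ≠ 0) {K : ℝ} (hK : MinorRatioBound A K)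
    (i j : Fin m) : w j ≤ K ^ (p / (2 - p)) * w i := by
  have hK1 : 1 ≤ K := hK.one_le f hf
  by_contra! hlt
  have hscale := mul_sq_rpow_le_of_rpow_mul_le hp hp2 (zero_le_one.trans hK1) (hw.1 i) (hw.1 j)
    hlt.le
  have hle : w j ≤ w i := by
    rw [hw.2 i, hw.2 j]
    exact leverage_le_leverage_of_det_sq_le (det_gram_lewisRescaled_pos hw.1 f hf)
      (hK.det_sq_diagonal_mul_le hscale)
  have hone : 1 ≤ K ^ (p / (2 - p)) :=
    one_le_rpow hK1 (div_nonneg hp.le (sub_pos.mpr hp2).le)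
  exact (hle.trans (le_mul_of_one_le_left (hw.1 i).le hone)).not_gt hlt

end LewisWeight

section Limit

theorem tendsto_rpow_div_two_sub_nhds_zero {K : ℝ} (hK : 0 < K) :
    Tendsto (fun p : ℝ => K ^ (p / (2 - p))) (𝓝 0) (𝓝 1) := by
  have hcont : ContinuousAt (fun p : ℝ => K ^ (p / (2 - p))) 0 :=
    continuousAt_const.rpow (continuousAt_id.div (by fun_prop) (by norm_num)) (Or.inl hK.ne')
  simpa using hcont.tendsto

theorem tendsto_sum_div_card_of_le_mul {α ι : Type*} [Fintype ι] {l : Filter α} {w : α → ι → ℝ}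
    {r : α → ℝ} {s : ℝ} (hr : Tendsto r l (𝓝 1)) (hsum : ∀ᶠ a in l, ∑ i, w a i = s)
    (hle : ∀ᶠ a in l, ∀ i j, w a j ≤ r a * w a i) (i : ι) :
    Tendsto (fun a => w a i) l (𝓝 (s / Fintype.card ι)) := by
  have hcard : (0 : ℝ) < Fintype.card ι := Nat.cast_pos.mpr (Fintype.card_pos_iff.mpr ⟨i⟩)
  have hlower : Tendsto (fun a => s / Fintype.card ι / r a) l (𝓝 (s / Fintype.card ι)) := by
    simpa only [div_one, inv_one, mul_one, div_eq_mul_inv] using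
      (hr.inv₀ one_ne_zero).const_mul (s / Fintype.card ι)
  have hupper : Tendsto (fun a => r a * (s / Fintype.card ι)) l (𝓝 (s / Fintype.card ι)) := by
    simpa using hr.mul_const (s / Fintype.card ι)
  refine tendsto_of_tendsto_of_tendsto_of_le_of_le' hlower hupper ?_ ?_
  · filter_upwards [hsum, hle, hr.eventually (lt_mem_nhds one_pos)] with a hsum hle hpos
    have hs : s ≤ Fintype.card ι * (r a * w a i) := by
      simpa [hsum] using Finset.sum_le_card_nsmul Finset.univ (w a) _ fun j _ => hle i j
    rw [div_le_iff₀ hpos, div_le_iff₀ hcard]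
    linarith
  · filter_upwards [hsum, hle] with a hsum hle
    have hs : Fintype.card ι * w a i ≤ r a * s := by
      simpa [← hsum, Finset.mul_sum] using
        Finset.card_nsmul_le_sum Finset.univ (fun j => r a * w a j) _ fun j _ => hle j i
    rw [← mul_div_assoc, le_div_iff₀ hcard]
    linarith

end Limit

/-- as `p → 0⁺`, the Lewis weights of a matrix in general position
converge to the uniform vector `n/m`. -/
theorem lewis_weight_limit_zero {m n : ℕ} (hn : 1 ≤ n) (hmn : n ≤ m)
    (A : Matrix (Fin m) (Fin n) ℝ)
    (hgen : ∀ s : Finset (Fin m), s.card = n →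
      LinearIndependent ℝ (fun i : {x // x ∈ s} => A i.1))
    (w : ℝ → Fin m → ℝ) (hw : ∀ p : ℝ, 0 < p → IsLewisWeight A p (w p)) :
    ∀ i : Fin m, Filter.Tendsto (fun p => w p i)
      (nhdsWithin 0 (Set.Ioi 0)) (nhds ((n : ℝ) / (m : ℝ))) := by
  intro i
  have hminor : ∀ f : Fin n ↪ Fin m, (A.submatrix f id).det ≠ 0 :=
    det_submatrix_ne_zero_of_linearIndependent (by simpa only [Fintype.card_fin] using hgen)
  obtain ⟨K, hK⟩ := exists_minorRatioBound hminor
  obtain ⟨f⟩ : Nonempty (Fin n ↪ Fin m) := ⟨Fin.castLEEmb hmn⟩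
  have hKpos : 0 < K := one_pos.trans_le (hK.one_le f (hminor f))
  have hratio : Tendsto (fun p : ℝ => K ^ (p / (2 - p))) (𝓝[>] 0) (𝓝 1) :=
    (tendsto_rpow_div_two_sub_nhds_zero hKpos).mono_left nhdsWithin_le_nhds
  have hsum : ∀ᶠ p in 𝓝[>] (0 : ℝ), ∑ j, w p j = n := by
    filter_upwards [self_mem_nhdsWithin] with p hp
    exact (hw p hp).sum_eq f (hminor f)
  have hle : ∀ᶠ p in 𝓝[>] (0 : ℝ), ∀ i j, w p j ≤ K ^ (p / (2 - p)) * w p i := by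
    filter_upwards [Ioo_mem_nhdsGT two_pos] with p hp
    exact (hw p hp.1).le_rpow_mul hp.1 hp.2 f (hminor f) hK
  simpa only [Fintype.card_fin] using tendsto_sum_div_card_of_le_mul hratio hsum hle i
end

section
/- Let A ∈ ℝ^{m×n}, c ∈ ℝ^m, w ∈ ℝ^m_{>0}, C_norm > 0, and let a, d ∈ ℝ^m satisfy d_i > 0 and |a_i| ≤ √(d_i) for all i ∈ [m]. For t > 0 define δ_t = inf_{η∈ℝⁿ} ‖(t·c + w·a − Aη)/(w·√d)‖_{w+∞}, where all vector operations (product, quotient, square root) are entrywise and ‖y‖_{w+∞} = ‖y‖_∞ + C_norm·‖y‖_w. Then for every t > 0 and α ≥ 0: δ_{(1+α)t} ≤ (1+α)·δ_t + α·(1 + C_norm·√(Σ_{i=1}^m w_i)). -/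
/-!
Write `r t η = (t c + w a - A η) / (w √d)` for the residual whose mixed norm is minimised in `δ_t`.
Scaling the minimiser along with `t` gives the exact identity
`r (s t) (s η) = s r t η - (s - 1) a / √d`, because only the term `w a` fails to be homogeneous.
The mixed norm is a seminorm, so `δ_{s t} ≤ |s| δ_t + |s - 1| ‖a / √d‖_{w+∞}`, and self-concordance
makes `a / √d` a vector with entries in `[-1, 1]`, whose mixed norm is at most `1 + C √(∑ w)`.
-/

open Matrix Real BigOperators Pointwise

/-- The weighted norm `‖x‖_w = (∑ i, w i * x i ^ 2) ^ (1/2)`. -/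
noncomputable def wNorm {m : ℕ} (w x : Fin m → ℝ) : ℝ :=
  Real.sqrt (∑ i, w i * x i ^ 2)

/-- The mixed norm `‖y‖_{w+∞} = ‖y‖_∞ + C·‖y‖_w` (`‖·‖` on `Fin m → ℝ` is the `ℓ∞` norm). -/
noncomputable def mixNorm {m : ℕ} (C : ℝ) (w y : Fin m → ℝ) : ℝ :=
  ‖y‖ + C * wNorm w y

/-- The centrality measure
`δ_t(w) = inf_η ‖(t·c + w·a - Aη)/(w·√d)‖_{w+∞}` (entrywise operations). -/
noncomputable def deltaC {m n : ℕ} (A : Matrix (Fin m) (Fin n) ℝ) (C : ℝ)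
    (c a d : Fin m → ℝ) (t : ℝ) (w : Fin m → ℝ) : ℝ :=
  sInf (Set.range fun η : Fin n → ℝ =>
    mixNorm C w (fun i => (t * c i + w i * a i - A.mulVec η i) / (w i * Real.sqrt (d i))))

section WeightedNorm

variable {m : ℕ} {w : Fin m → ℝ}

lemma wNorm_nonneg (w x : Fin m → ℝ) : 0 ≤ wNorm w x :=
  Real.sqrt_nonneg _

lemma wNorm_smul (w : Fin m → ℝ) (s : ℝ) (x : Fin m → ℝ) : wNorm w (s • x) = |s| * wNorm w x := by
  have hsum : ∑ i, w i * (s • x) i ^ 2 = s ^ 2 * ∑ i, w i * x i ^ 2 := by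
    simp only [Pi.smul_apply, smul_eq_mul, mul_pow, Finset.mul_sum, mul_left_comm]
  rw [wNorm, hsum, Real.sqrt_mul (sq_nonneg s), Real.sqrt_sq_eq_abs, wNorm]

lemma wNorm_eq_norm_toLp (hw : ∀ i, 0 ≤ w i) (x : Fin m → ℝ) :
    wNorm w x = ‖WithLp.toLp 2 fun i => √(w i) * x i‖ := by
  simp only [EuclideanSpace.norm_eq, wNorm, Real.norm_eq_abs, sq_abs, mul_pow, Real.sq_sqrt (hw _)]

lemma wNorm_sub_le (hw : ∀ i, 0 ≤ w i) (x y : Fin m → ℝ) :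
    wNorm w (x - y) ≤ wNorm w x + wNorm w y := by
  simp only [wNorm_eq_norm_toLp hw, Pi.sub_apply, mul_sub]
  exact norm_sub_le (WithLp.toLp 2 fun i => √(w i) * x i) (WithLp.toLp 2 fun i => √(w i) * y i)

lemma wNorm_le_norm_mul_sqrt_sum (hw : ∀ i, 0 ≤ w i) (x : Fin m → ℝ) :
    wNorm w x ≤ ‖x‖ * √(∑ i, w i) := by
  have hx (i : Fin m) : x i ^ 2 ≤ ‖x‖ ^ 2 := sq_le_sq' (neg_le_of_abs_le (norm_le_pi_norm x i))
    (le_of_abs_le (norm_le_pi_norm x i))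
  calc
    wNorm w x ≤ √(∑ i, w i * ‖x‖ ^ 2) :=
      Real.sqrt_le_sqrt <| Finset.sum_le_sum fun i _ => mul_le_mul_of_nonneg_left (hx i) (hw i)
    _ = ‖x‖ * √(∑ i, w i) := by
      rw [← Finset.sum_mul, mul_comm, Real.sqrt_mul (sq_nonneg _), Real.sqrt_sq (norm_nonneg x)]

end WeightedNorm

section MixedNorm

variable {m : ℕ} {C : ℝ} {w : Fin m → ℝ}

lemma mixNorm_nonneg (hC : 0 ≤ C) (w y : Fin m → ℝ) : 0 ≤ mixNorm C w y :=
  add_nonneg (norm_nonneg y) (mul_nonneg hC (wNorm_nonneg w y))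

lemma mixNorm_smul (C : ℝ) (w : Fin m → ℝ) (s : ℝ) (y : Fin m → ℝ) :
    mixNorm C w (s • y) = |s| * mixNorm C w y := by
  rw [mixNorm, mixNorm, norm_smul, wNorm_smul, Real.norm_eq_abs]
  ring

lemma mixNorm_sub_le (hC : 0 ≤ C) (hw : ∀ i, 0 ≤ w i) (x y : Fin m → ℝ) :
    mixNorm C w (x - y) ≤ mixNorm C w x + mixNorm C w y :=
  calc
    mixNorm C w (x - y) ≤ (‖x‖ + ‖y‖) + C * (wNorm w x + wNorm w y) :=
      add_le_add (norm_sub_le x y) (mul_le_mul_of_nonneg_left (wNorm_sub_le hw x y) hC)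
    _ = mixNorm C w x + mixNorm C w y := by
      rw [mixNorm, mixNorm]
      ring

lemma mixNorm_le_norm_mul (hC : 0 ≤ C) (hw : ∀ i, 0 ≤ w i) (y : Fin m → ℝ) :
    mixNorm C w y ≤ ‖y‖ * (1 + C * √(∑ i, w i)) :=
  calc
    mixNorm C w y ≤ ‖y‖ + C * (‖y‖ * √(∑ i, w i)) := by
      rw [mixNorm]
      gcongr
      exact wNorm_le_norm_mul_sqrt_sum hw y
    _ = ‖y‖ * (1 + C * √(∑ i, w i)) := by ring

end MixedNorm

section Centrality

variable {m n : ℕ} {C : ℝ} {w : Fin m → ℝ}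

/-- The residual `(t·c + w·a - Aη)/(w·√d)` (entrywise operations) whose mixed norm is minimised over
`η` in the centrality measure `deltaC`. An entry with `w i = 0` or `d i ≤ 0` is `0`, by the
conventions for division and square root. -/
noncomputable def centralityResidual (A : Matrix (Fin m) (Fin n) ℝ) (c a d w : Fin m → ℝ) (t : ℝ)
    (η : Fin n → ℝ) : Fin m → ℝ :=
  fun i => (t * c i + w i * a i - A.mulVec η i) / (w i * √(d i))

lemma deltaC_eq_iInf (A : Matrix (Fin m) (Fin n) ℝ) (C : ℝ) (c a d : Fin m → ℝ) (t : ℝ)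
    (w : Fin m → ℝ) :
    deltaC A C c a d t w = ⨅ η, mixNorm C w (centralityResidual A c a d w t η) :=
  rfl

lemma deltaC_le_mixNorm (hC : 0 ≤ C) (A : Matrix (Fin m) (Fin n) ℝ) (c a d : Fin m → ℝ) (t : ℝ)
    (w : Fin m → ℝ) (η : Fin n → ℝ) :
    deltaC A C c a d t w ≤ mixNorm C w (centralityResidual A c a d w t η) :=
  ciInf_le ⟨0, Set.forall_mem_range.2 fun _ => mixNorm_nonneg hC w _⟩ η

lemma centralityResidual_mul_smul (hw : ∀ i, w i ≠ 0) (A : Matrix (Fin m) (Fin n) ℝ)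
    (c a d : Fin m → ℝ) (s t : ℝ) (η : Fin n → ℝ) :
    centralityResidual A c a d w (s * t) (s • η) =
      s • centralityResidual A c a d w t η - (s - 1) • fun i => a i / √(d i) := by
  ext i
  simp only [centralityResidual, Matrix.mulVec_smul, Pi.sub_apply, Pi.smul_apply, smul_eq_mul]
  rw [← mul_div_mul_left (a i) (√(d i)) (hw i)]
  ring

lemma deltaC_mul_le (hC : 0 ≤ C) (hw : ∀ i, 0 < w i) (A : Matrix (Fin m) (Fin n) ℝ)
    (c a d : Fin m → ℝ) (s t : ℝ) :
    deltaC A C c a d (s * t) w ≤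
      |s| * deltaC A C c a d t w + |s - 1| * mixNorm C w fun i => a i / √(d i) := by
  rw [deltaC_eq_iInf A C c a d t, Real.mul_iInf_of_nonneg (abs_nonneg s), ← sub_le_iff_le_add]
  refine le_ciInf fun η => sub_le_iff_le_add.2 ?_
  calc
    deltaC A C c a d (s * t) w
        ≤ mixNorm C w (centralityResidual A c a d w (s * t) (s • η)) :=
      deltaC_le_mixNorm hC A c a d (s * t) w (s • η)
    _ ≤ mixNorm C w (s • centralityResidual A c a d w t η) +
          mixNorm C w ((s - 1) • fun i => a i / √(d i)) := by
      rw [centralityResidual_mul_smul fun i => (hw i).ne']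
      exact mixNorm_sub_le hC (fun i => (hw i).le) _ _
    _ = |s| * mixNorm C w (centralityResidual A c a d w t η) +
          |s - 1| * mixNorm C w fun i => a i / √(d i) := by
      rw [mixNorm_smul, mixNorm_smul]

theorem centrality_t_step_general (A : Matrix (Fin m) (Fin n) ℝ) (c : Fin m → ℝ)
    (hw : ∀ i, 0 < w i) (hC : 0 ≤ C) {a d : Fin m → ℝ} (hd : ∀ i, 0 < d i)
    (had : ∀ i, |a i| ≤ √(d i)) (t α : ℝ) :
    deltaC A C c a d ((1 + α) * t) w ≤
      |1 + α| * deltaC A C c a d t w + |α| * (1 + C * √(∑ i, w i)) := by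
  have hnorm : ‖fun i => a i / √(d i)‖ ≤ 1 := by
    refine (pi_norm_le_iff_of_nonneg zero_le_one).2 fun i => ?_
    have hsqrt : 0 < √(d i) := Real.sqrt_pos.2 (hd i)
    rw [Real.norm_eq_abs, abs_div, abs_of_pos hsqrt]
    exact (div_le_one hsqrt).2 (had i)
  have hmix : (mixNorm C w fun i => a i / √(d i)) ≤ 1 + C * √(∑ i, w i) :=
    (mixNorm_le_norm_mul hC (fun i => (hw i).le) _).trans
      (mul_le_of_le_one_left (by positivity) hnorm)
  have hstep := deltaC_mul_le hC hw A c a d (1 + α) t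
  rw [add_sub_cancel_left] at hstep
  exact hstep.trans (by gcongr)

end Centrality

/-- effect of increasing the path parameter `t` on centrality. -/
theorem centrality_t_step {m n : ℕ} (A : Matrix (Fin m) (Fin n) ℝ)
    (c : Fin m → ℝ) (w : Fin m → ℝ) (hw : ∀ i, 0 < w i)
    (Cnorm : ℝ) (hC : 0 < Cnorm) (a d : Fin m → ℝ)
    (hd : ∀ i, 0 < d i) (had : ∀ i, |a i| ≤ Real.sqrt (d i))
    (t α : ℝ) (ht : 0 < t) (hα : 0 ≤ α) :
    deltaC A Cnorm c a d ((1 + α) * t) w ≤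
      (1 + α) * deltaC A Cnorm c a d t w +
        α * (1 + Cnorm * Real.sqrt (∑ i, w i)) := by
  simpa only [abs_of_nonneg hα, abs_of_nonneg (add_nonneg zero_le_one hα)] using
    centrality_t_step_general A c hw hC.le hd had t α
end
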